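/- Let X be a real normed space, let σ be the incenter mixer on X, and define the Nagel co-mixer τ : X × X × X → X by τ(a,b,c) = a + b + c - 2σ(a,b,c). Then τ is 1-Lipschitz in each variable separately; in particular, ‖τ(a,b,c) - τ(a,b,c')‖ ≤ ‖c - c'‖ for all a, b, c, c' ∈ X. -/

import Mathlib

/-!
Fix `a ≠ b`, put `p = ‖a - b‖`, and let `S`, `S'` be the perimeters of `a b c` and `a b c'`, and
`σ = σ(a,b,c)`. Write `Δx = ‖b - c'‖ - ‖b - c‖`, `Δy = ‖a - c'‖ - ‖a - c‖`. Clearing denominators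
gives the exact identity

  `S' • (τ(a,b,c') - τ(a,b,c)) = (S' - 2p) • (c' - c) - 2 • (Δx • (a - σ) + Δy • (b - σ))`.

The triangle inequality gives `S' - 2p ≥ 0` and `|Δx|, |Δy| ≤ ‖c' - c‖`. So it suffices that
`‖s • (a - σ) + t • (b - σ)‖ ≤ p * r` whenever `|s|, |t| ≤ r`. By convexity only the signs
`s = ± t` matter: `(a - σ) - (b - σ)` has norm `p`, and `(a - σ) + (b - σ)` has norm at most `p`
(`norm_sub_incenter_add_le`). If `a = b`, then `τ(a,a,c) = c`. The other two variables follow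
by the symmetry of `τ`.
-/

open scoped Classical in
/-- The incenter mixer on a real normed space. -/
noncomputable def incenterMixer {X : Type*} [NormedAddCommGroup X] [NormedSpace ℝ X]
    (a b c : X) : X :=
  if a = b ∧ b = c then a
  else (‖b - c‖ + ‖a - c‖ + ‖a - b‖)⁻¹ • (‖b - c‖ • a + ‖a - c‖ • b + ‖a - b‖ • c)

/-- The Nagel co-mixer `τ(a,b,c) = a + b + c - 2σ(a,b,c)` on a real normed space. -/
noncomputable def nagelComixer {X : Type*} [NormedAddCommGroup X] [NormedSpace ℝ X]
    (a b c : X) : X :=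
  a + b + c - (2 : ℝ) • incenterMixer a b c

lemma perimeter_pos {X : Type*} [NormedAddCommGroup X] {a b : X} (h : a ≠ b) (c : X) :
    0 < ‖b - c‖ + ‖a - c‖ + ‖a - b‖ := by
  have : 0 < ‖a - b‖ := norm_pos_iff.mpr (sub_ne_zero.mpr h)
  positivity

section

variable {X : Type*} [NormedAddCommGroup X] [NormedSpace ℝ X]

lemma incenterMixer_swap_left (a b c : X) : incenterMixer a b c = incenterMixer b a c := by
  unfold incenterMixer
  by_cases h : a = b ∧ b = c
  · obtain ⟨rfl, rfl⟩ := h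
    rfl
  · have h' : ¬ (b = a ∧ a = c) := by
      rintro ⟨rfl, rfl⟩
      exact h ⟨rfl, rfl⟩
    rw [if_neg h, if_neg h', norm_sub_rev b a, add_comm ‖b - c‖, add_comm (‖b - c‖ • a)]

lemma incenterMixer_swap_right (a b c : X) : incenterMixer a b c = incenterMixer a c b := by
  unfold incenterMixer
  by_cases h : a = b ∧ b = c
  · obtain ⟨rfl, rfl⟩ := h
    rfl
  · have h' : ¬ (a = c ∧ c = b) := by
      rintro ⟨rfl, rfl⟩
      exact h ⟨rfl, rfl⟩
    rw [if_neg h, if_neg h', norm_sub_rev c b, add_right_comm, add_right_comm (‖b - c‖ • a)]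

lemma nagelComixer_swap_left (a b c : X) : nagelComixer a b c = nagelComixer b a c := by
  unfold nagelComixer
  rw [incenterMixer_swap_left a b c, add_comm a b]

lemma nagelComixer_swap_right (a b c : X) : nagelComixer a b c = nagelComixer a c b := by
  unfold nagelComixer
  rw [incenterMixer_swap_right a b c, add_right_comm]

lemma nagelComixer_self_left (a c : X) : nagelComixer a a c = c := by
  unfold nagelComixer incenterMixer
  by_cases h : a = c
  · subst h
    simp only [and_self, if_true]
    module
  · have hn : ‖a - c‖ ≠ 0 := norm_ne_zero_iff.mpr (sub_ne_zero.mpr h)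
    have h' : ¬ (a = a ∧ a = c) := fun h' => h h'.2
    have h1 : (‖a - c‖ + ‖a - c‖)⁻¹ * ‖a - c‖ = 1 / 2 := by
      field_simp
      norm_num
    rw [if_neg h']
    simp only [sub_self, norm_zero, zero_smul, add_zero, smul_add, smul_smul, h1]
    module

lemma perimeter_smul_incenterMixer {a b : X} (h : a ≠ b) (c : X) :
    (‖b - c‖ + ‖a - c‖ + ‖a - b‖) • incenterMixer a b c
      = ‖b - c‖ • a + ‖a - c‖ • b + ‖a - b‖ • c := by
  unfold incenterMixer
  rw [if_neg (fun h' => h h'.1), smul_inv_smul₀ (perimeter_pos h c).ne']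

lemma norm_sub_incenter_add_le {a b : X} (h : a ≠ b) (c : X) :
    ‖(a - incenterMixer a b c) + (b - incenterMixer a b c)‖ ≤ ‖a - b‖ := by
  have hS := perimeter_pos h c
  have hσ := perimeter_smul_incenterMixer h c
  set σ := incenterMixer a b c
  have hxp : ‖b - c‖ ≤ ‖a - c‖ + ‖a - b‖ := by
    have := norm_sub_le_norm_sub_add_norm_sub b a c
    rw [norm_sub_rev b a] at this
    linarith
  have hyp : ‖a - c‖ ≤ ‖b - c‖ + ‖a - b‖ := by
    have := norm_sub_le_norm_sub_add_norm_sub a b c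
    linarith
  have key : (‖b - c‖ + ‖a - c‖ + ‖a - b‖) • ((a - σ) + (b - σ))
      = (‖a - c‖ + ‖a - b‖ - ‖b - c‖) • (a - c) + (‖b - c‖ + ‖a - b‖ - ‖a - c‖) • (b - c) := by
    linear_combination (norm := module) (-2 : ℝ) • hσ
  have hn := norm_add_le ((‖a - c‖ + ‖a - b‖ - ‖b - c‖) • (a - c))
    ((‖b - c‖ + ‖a - b‖ - ‖a - c‖) • (b - c))
  rw [← key, norm_smul_of_nonneg hS.le, norm_smul_of_nonneg (by linarith),
    norm_smul_of_nonneg (by linarith)] at hn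
  refine le_of_mul_le_mul_left (hn.trans ?_) hS
  -- The difference of the two sides is `p ^ 2 - (x - y) ^ 2`.
  nlinarith [mul_nonneg (sub_nonneg.mpr hxp) (sub_nonneg.mpr hyp)]

lemma norm_smul_add_smul_le {u v : X} {p r s t : ℝ} (hadd : ‖u + v‖ ≤ p) (hsub : ‖u - v‖ ≤ p)
    (hs : |s| ≤ r) (ht : |t| ≤ r) : ‖s • u + t • v‖ ≤ p * r := by
  have hp : 0 ≤ p := (norm_nonneg _).trans hadd
  have e : s • u + t • v = ((s + t) / 2) • (u + v) + ((s - t) / 2) • (u - v) := by module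
  have hr : |(s + t) / 2| + |(s - t) / 2| ≤ r := by
    rw [abs_le] at hs ht
    rcases abs_cases ((s + t) / 2) with h1 | h1 <;> rcases abs_cases ((s - t) / 2) with h2 | h2 <;>
      linarith
  calc ‖s • u + t • v‖ ≤ |(s + t) / 2| * ‖u + v‖ + |(s - t) / 2| * ‖u - v‖ := by
        rw [e]
        refine (norm_add_le _ _).trans ?_
        rw [norm_smul, norm_smul, Real.norm_eq_abs, Real.norm_eq_abs]
    _ ≤ |(s + t) / 2| * p + |(s - t) / 2| * p := by gcongr
    _ = p * (|(s + t) / 2| + |(s - t) / 2|) := by ring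
    _ ≤ p * r := by gcongr

lemma nagelComixer_lipschitz_right (a b c c' : X) :
    ‖nagelComixer a b c - nagelComixer a b c'‖ ≤ ‖c - c'‖ := by
  by_cases h : a = b
  · subst h
    rw [nagelComixer_self_left, nagelComixer_self_left]
  have hS := perimeter_pos h c'
  have hσ := perimeter_smul_incenterMixer h c
  have hσ' := perimeter_smul_incenterMixer h c'
  have hadd := norm_sub_incenter_add_le h c
  have hsub : ‖(a - incenterMixer a b c) - (b - incenterMixer a b c)‖ ≤ ‖a - b‖ := by
    rw [sub_sub_sub_cancel_right]
  have hbd : ∀ z : X, |‖z - c'‖ - ‖z - c‖| ≤ ‖c - c'‖ := by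
    intro z
    have := abs_norm_sub_norm_le (z - c') (z - c)
    rwa [sub_sub_sub_cancel_left] at this
  have hM := norm_smul_add_smul_le hadd hsub (hbd b) (hbd a)
  unfold nagelComixer
  set σ := incenterMixer a b c
  set σ' := incenterMixer a b c'
  set S := ‖b - c'‖ + ‖a - c'‖ + ‖a - b‖ with hSdef
  have hSp : 0 ≤ S - 2 * ‖a - b‖ := by
    have := norm_sub_le_norm_sub_add_norm_sub a c' b
    rw [norm_sub_rev c' b] at this
    linarith
  have key : S • ((a + b + c - (2 : ℝ) • σ) - (a + b + c' - (2 : ℝ) • σ'))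
      = (S - 2 * ‖a - b‖) • (c - c')
        + (2 : ℝ) • ((‖b - c'‖ - ‖b - c‖) • (a - σ) + (‖a - c'‖ - ‖a - c‖) • (b - σ)) := by
    rw [hSdef] at hσ' ⊢
    linear_combination (norm := module) (2 : ℝ) • hσ' - (2 : ℝ) • hσ
  refine le_of_mul_le_mul_left ?_ hS
  rw [← norm_smul_of_nonneg hS.le, key]
  refine (norm_add_le _ _).trans ?_
  rw [norm_smul_of_nonneg hSp, norm_smul_of_nonneg zero_le_two]
  linarith

end

/-- The Nagel co-mixer on a real normed space is `1`-Lipschitz in each variable separately. -/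
theorem nagelComixer_lipschitz {X : Type*} [NormedAddCommGroup X] [NormedSpace ℝ X] :
    (∀ a a' b c : X, ‖nagelComixer a b c - nagelComixer a' b c‖ ≤ ‖a - a'‖) ∧
    (∀ a b b' c : X, ‖nagelComixer a b c - nagelComixer a b' c‖ ≤ ‖b - b'‖) ∧
    (∀ a b c c' : X, ‖nagelComixer a b c - nagelComixer a b c'‖ ≤ ‖c - c'‖) := by
  refine ⟨fun a a' b c => ?_, fun a b b' c => ?_, nagelComixer_lipschitz_right⟩
  · rw [nagelComixer_swap_left a, nagelComixer_swap_right b a, nagelComixer_swap_left a',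
      nagelComixer_swap_right b a']
    exact nagelComixer_lipschitz_right b c a a'
  · rw [nagelComixer_swap_right a b, nagelComixer_swap_right a b']
    exact nagelComixer_lipschitz_right a c b b'
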